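/- If a group H admits a surjective homomorphism onto a free non-abelian group, then for every proper word w the verbal set w[H] is not rational in H. -/

import Mathlib

open Pointwise

/-- The verbal set `w[G]`: all values of the word `w` in `G`. -/
def verbalSet (w : FreeGroup ℕ) (G : Type*) [Group G] : Set G :=
  {g | ∃ φ : FreeGroup ℕ →* G, φ w = g}

/-- Exponent sums of a word in the generators, as a finitely supported function. -/
noncomputable def expSum (w : FreeGroup ℕ) : ℕ →₀ ℤ :=
  Multiplicative.toAdd
    ((FreeGroup.lift fun i => Multiplicative.ofAdd (Finsupp.single i (1 : ℤ))) w)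

/-- `e(w)`: the gcd of the exponent sums of the generators in `w` (0 if all are 0). -/
noncomputable def eWord (w : FreeGroup ℕ) : ℕ :=
  (expSum w).support.gcd fun i => ((expSum w) i).natAbs

/-- A word is proper if `w[G] ≠ {1}` and `w[H] ≠ H` for some groups `G`, `H`. -/
def IsProperWord (w : FreeGroup ℕ) : Prop :=
  ∃ (G : Type) (_ : Group G) (H : Type) (_ : Group H),
    verbalSet w G ≠ {1} ∧ verbalSet w H ≠ Set.univ

/-- Rational subsets of a monoid: the smallest family containing the finite sets and
closed under union, product and submonoid generation (Kleene star). -/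
inductive IsRational {M : Type*} [Monoid M] : Set M → Prop
  | finite (s : Set M) (h : s.Finite) : IsRational s
  | union {s t : Set M} : IsRational s → IsRational t → IsRational (s ∪ t)
  | mul {s t : Set M} : IsRational s → IsRational t → IsRational (s * t)
  | star {s : Set M} : IsRational s → IsRational (Submonoid.closure s : Set M)

/-!
A rational subset of a free group is the image of a regular language, and running the automaton on
all words that freely reduce to a given one yields a pumping lemma for reduced words: powers of a
fixed block inside a reduced representative can be lengthened without leaving the set.

Let `w` be proper. If `e(w) = 0` then every `w`-value has exponent sum zero, but pumping `gⁿ` in a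
nontrivial reduced value `gⁿ v g⁻ⁿ`, with `g` a letter, changes the exponent sum. If `e = e(w) > 1`,
pumping the `w`-values `(xⁿy)^(me)` gives `w`-values containing `me` different syllables `xⁱ`, once
each. However, the number of syllables whose signed number of occurrences is not divisible by `e` is
bounded on `w`-values: counting occurrences modulo `e` is a quasimorphism for the Hamming distance
(a product of reduced words merges at most one pair of syllables), and up to a bounded error it maps
a `w`-value to an `e`-th multiple, that is, to zero.
-/

section Rational

variable {M N : Type*} [Monoid M] [Monoid N]

theorem IsRational.image (f : M →* N) {s : Set M} (hs : IsRational s) : IsRational (f '' s) := by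
  induction hs with
  | finite s hs => exact .finite _ (hs.image f)
  | union _ _ ihs iht => rw [Set.image_union]; exact ihs.union iht
  | mul _ _ ihs iht => rw [Set.image_mul]; exact ihs.mul iht
  | star _ ih => rw [← Submonoid.coe_map, MonoidHom.map_mclosure]; exact ih.star

theorem IsRational.exists_image_eq {f : M →* N} (hf : Function.Surjective f) {t : Set N}
    (ht : IsRational t) : ∃ s, IsRational s ∧ f '' s = t := by
  induction ht with
  | finite t ht =>
    exact ⟨Function.surjInv hf '' t, .finite _ (ht.image _),
      by simp [Set.image_image, Function.surjInv_eq]⟩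
  | union _ _ iht ihu =>
    obtain ⟨⟨s, hs, rfl⟩, r, hr, rfl⟩ := And.intro iht ihu
    exact ⟨s ∪ r, hs.union hr, Set.image_union ..⟩
  | mul _ _ iht ihu =>
    obtain ⟨⟨s, hs, rfl⟩, r, hr, rfl⟩ := And.intro iht ihu
    exact ⟨s * r, hs.mul hr, Set.image_mul f⟩
  | star _ iht =>
    obtain ⟨s, hs, rfl⟩ := iht
    exact ⟨_, hs.star, by rw [← Submonoid.coe_map, MonoidHom.map_mclosure]⟩

end Rational

section RegularLanguage

open scoped Computability

variable {α : Type*} {L K : Language α}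

theorem isRegular_of_leftQuotient_singleton_mem {S : Set (Language α)} (hS : S.Finite) (hL : L ∈ S)
    (hquot : ∀ J ∈ S, ∀ a, J.leftQuotient [a] ∈ S) : L.IsRegular := by
  refine .of_finite_range_leftQuotient (hS.subset ?_)
  rintro _ ⟨x, rfl⟩
  induction x using List.reverseRecOn with
  | nil => exact hL
  | append_singleton x a ih => rw [Language.leftQuotient_append]; exact hquot _ ih a

theorem exists_addSubmonoid_of_isRegular (hL : L.IsRegular) :
    ∃ S : AddSubmonoid (Language α), (S : Set (Language α)).Finite ∧ L ∈ S ∧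
      ∀ J ∈ S, ∀ a, J.leftQuotient [a] ∈ S := by
  let unions : AddSubmonoid (Language α) :=
    { carrier := sSup '' 𝒫 Set.range L.leftQuotient
      zero_mem' := ⟨∅, Set.empty_subset _, sSup_empty⟩
      add_mem' := by
        rintro _ _ ⟨B, hB, rfl⟩ ⟨C, hC, rfl⟩
        exact ⟨B ∪ C, Set.union_subset hB hC, sSup_union⟩ }
  refine ⟨unions, hL.finite_range_leftQuotient.finite_subsets.image _,
    ⟨{L}, Set.singleton_subset_iff.2 ⟨[], rfl⟩, sSup_singleton⟩, ?_⟩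
  rintro _ ⟨B, hB, rfl⟩ a
  refine ⟨(·.leftQuotient [a]) '' B, ?_, ?_⟩
  · rintro _ ⟨J, hJ, rfl⟩
    obtain ⟨x, rfl⟩ := hB hJ
    exact ⟨x ++ [a], L.leftQuotient_append x [a]⟩
  · rw [sSup_image]
    ext y
    simp [sSup_eq_iSup, Language.mem_iSup]

theorem leftQuotient_add (L K : Language α) (x : List α) :
    (L + K).leftQuotient x = L.leftQuotient x + K.leftQuotient x :=
  rfl

open scoped Classical in
theorem leftQuotient_singleton_mul (L K : Language α) (a : α) :
    (L * K).leftQuotient [a] =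
      L.leftQuotient [a] * K + if [] ∈ L then K.leftQuotient [a] else 0 := by
  ext x
  simp only [Language.mem_leftQuotient, Language.mem_add, Language.mem_mul]
  constructor
  · rintro ⟨_ | ⟨b, u⟩, hu, v, hv, huv⟩
    · right
      rw [if_pos hu]
      rwa [Language.mem_leftQuotient, ← huv]
    · obtain ⟨rfl, rfl⟩ := List.cons.inj huv
      exact .inl ⟨u, hu, v, hv, rfl⟩
  · rintro (⟨u, hu, v, hv, rfl⟩ | hx)
    · exact ⟨a :: u, hu, v, hv, rfl⟩
    · split_ifs at hx with hnil
      · exact ⟨[], hnil, [a] ++ x, hx, rfl⟩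
      · exact absurd hx (Language.notMem_zero x)

theorem leftQuotient_singleton_kstar (L : Language α) (a : α) :
    L∗.leftQuotient [a] = L.leftQuotient [a] * L∗ := by
  ext x
  simp only [Language.mem_leftQuotient, Language.mem_mul]
  constructor
  · intro hx
    obtain ⟨_ | ⟨_ | ⟨b, u⟩, S⟩, hxS, hS⟩ := Language.mem_kstar_iff_exists_nonempty.1 hx
    · simp at hxS
    · simp at hS
    · obtain ⟨rfl, rfl⟩ := List.cons.inj hxS
      exact ⟨u, (hS _ List.mem_cons_self).1, S.flatten,
        Language.join_mem_kstar fun y hy => (hS y (List.mem_cons_of_mem _ hy)).1, rfl⟩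
  · rintro ⟨u, hu, _, ⟨S, rfl, hS⟩, rfl⟩
    exact ⟨([a] ++ u) :: S, rfl, List.forall_mem_cons.2 ⟨hu, hS⟩⟩

theorem isRegular_language_of_finite (hL : Set.Finite (L : Set (List α))) : L.IsRegular := by
  have hsuffixes : {y : List α | ∃ l ∈ L, y <:+ l}.Finite := by
    refine (hL.biUnion fun l _ => l.tails.finite_toSet).subset ?_
    rintro y ⟨l, hl, hy⟩
    exact Set.mem_biUnion hl ((List.mem_tails _ _).2 hy)
  refine .of_finite_range_leftQuotient (hsuffixes.finite_subsets.subset ?_)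
  rintro _ ⟨x, rfl⟩ y hy
  exact ⟨_, hy, List.suffix_append _ _⟩

theorem isRegular_language_mul (hL : L.IsRegular) (hK : K.IsRegular) : (L * K).IsRegular := by
  classical
  obtain ⟨S, hS, hLS, hSquot⟩ := exists_addSubmonoid_of_isRegular hL
  obtain ⟨T, hT, hKT, hTquot⟩ := exists_addSubmonoid_of_isRegular hK
  refine isRegular_of_leftQuotient_singleton_mem (hS.image2 (fun A B => A * K + B) hT)
    ⟨L, hLS, 0, zero_mem T, add_zero _⟩ ?_
  rintro _ ⟨A, hA, B, hB, rfl⟩ a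
  refine ⟨A.leftQuotient [a], hSquot A hA a,
    (if [] ∈ A then K.leftQuotient [a] else 0) + B.leftQuotient [a], add_mem ?_ (hTquot B hB a), ?_⟩
  · split_ifs
    exacts [hTquot K hKT a, zero_mem T]
  · rw [leftQuotient_add, leftQuotient_singleton_mul, add_assoc]

theorem isRegular_language_kstar (hL : L.IsRegular) : L∗.IsRegular := by
  classical
  obtain ⟨S, hS, hLS, hSquot⟩ := exists_addSubmonoid_of_isRegular hL
  refine isRegular_of_leftQuotient_singleton_mem ((hS.image (· * L∗)).insert L∗)
    (Set.mem_insert _ _) ?_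
  rintro _ (rfl | ⟨A, hA, rfl⟩) a
  · exact .inr ⟨_, hSquot L hLS a, (leftQuotient_singleton_kstar L a).symm⟩
  · refine .inr ⟨A.leftQuotient [a] + if [] ∈ A then L.leftQuotient [a] else 0,
      add_mem (hSquot A hA a) ?_, ?_⟩
    · split_ifs
      exacts [hSquot L hLS a, zero_mem S]
    · simp only [leftQuotient_singleton_mul, leftQuotient_singleton_kstar, add_mul, ite_mul,
        zero_mul]

theorem toList_image_closure (s : Set (FreeMonoid α)) :
    FreeMonoid.toList '' (Submonoid.closure s : Set (FreeMonoid α)) =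
      KStar.kstar (α := Language α) (FreeMonoid.toList '' s) := by
  ext x
  rw [Submonoid.closure_eq_image_prod, Set.image_image]
  refine ⟨?_, ?_⟩
  · rintro ⟨S, hS, rfl⟩
    refine ⟨S.map FreeMonoid.toList, FreeMonoid.toList_prod S, ?_⟩
    rintro _ hl
    obtain ⟨y, hy, rfl⟩ := List.mem_map.1 hl
    exact ⟨y, hS y hy, rfl⟩
  · rintro ⟨S, rfl, hS⟩
    refine ⟨S.map FreeMonoid.ofList, ?_, ?_⟩
    · rintro _ hl
      obtain ⟨y, hy, rfl⟩ := List.mem_map.1 hl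
      obtain ⟨z, hz, rfl⟩ := hS y hy
      exact hz
    · exact (FreeMonoid.toList_prod _).trans (by simp)

theorem IsRational.isRegular {s : Set (FreeMonoid α)} (hs : IsRational s) :
    Language.IsRegular (FreeMonoid.toList '' s) := by
  induction hs with
  | finite s hs => exact isRegular_language_of_finite (hs.image _)
  | union _ _ ihs iht => rw [Set.image_union]; exact ihs.add iht
  | mul _ _ ihs iht =>
    rw [← Set.image2_mul, Set.image_image2_distrib FreeMonoid.toList_mul]
    exact isRegular_language_mul ihs iht
  | star _ ih => rw [toList_image_closure]; exact isRegular_language_kstar ih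

end RegularLanguage

section Pumping

open FreeGroup SetRel

variable {α : Type*}

theorem IsRational.exists_isRegular {s : Set (FreeGroup α)} (hs : IsRational s) :
    ∃ L : Language (α × Bool), L.IsRegular ∧ mk '' L = s := by
  let mkHom : FreeMonoid (α × Bool) →* FreeGroup α :=
    { toFun := fun l => mk l.toList
      map_one' := rfl
      map_mul' := fun _ _ => mul_mk.symm }
  obtain ⟨t, ht, rfl⟩ := hs.exists_image_eq (f := mkHom) Quot.mk_surjective
  exact ⟨_, ht.isRegular, Set.image_image ..⟩

theorem exists_red_of_mk_mem_image {L : Language (α × Bool)} {W : List (α × Bool)}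
    (hW : IsReduced W) (h : mk W ∈ mk '' L) : ∃ l ∈ L, Red l W := by
  classical
  obtain ⟨l, hl, hlW⟩ := h
  refine ⟨l, hl, ?_⟩
  rw [← hW.reduce_eq, ← reduce.sound hlW]
  exact reduce.red

/-- The pairs of states of `M` joined by a path whose label freely reduces to `A`. Reading free
reductions into the transitions turns a rational subset of a free group into a finite automaton
reading reduced words. -/
def redReach {σ : Type*} (M : DFA (α × Bool) σ) (A : List (α × Bool)) : SetRel σ σ :=
  {(q, r) | ∃ l, Red l A ∧ M.evalFrom q l = r}

section

variable {σ : Type*} (M : DFA (α × Bool) σ)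

theorem redReach_append (A B : List (α × Bool)) :
    redReach M (A ++ B) = redReach M A ○ redReach M B := by
  ext ⟨q, r⟩
  constructor
  · rintro ⟨l, hl, rfl⟩
    obtain ⟨l₁, l₂, rfl, h₁, h₂⟩ := Red.to_append_iff.1 hl
    exact ⟨_, ⟨l₁, h₁, rfl⟩, l₂, h₂, (M.evalFrom_of_append ..).symm⟩
  · rintro ⟨_, ⟨l₁, h₁, rfl⟩, l₂, h₂, rfl⟩
    exact ⟨l₁ ++ l₂, Red.append_append h₁ h₂, M.evalFrom_of_append ..⟩

theorem exists_redReach_flatten_replicate_eq [Finite σ] (B : List (α × Bool)) :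
    ∃ n p, 0 < p ∧ ∀ k, redReach M (List.replicate (n + p * k) B).flatten =
      redReach M (List.replicate n B).flatten := by
  have hadd (i j : ℕ) : redReach M (List.replicate (i + j) B).flatten =
      redReach M (List.replicate i B).flatten ○ redReach M (List.replicate j B).flatten := by
    rw [← redReach_append, ← List.replicate_append_replicate, List.flatten_append]
  obtain ⟨n, m, hnm, heq⟩ : ∃ n m, n < m ∧ redReach M (List.replicate n B).flatten =
      redReach M (List.replicate m B).flatten := by
    obtain ⟨n, m, hne, heq⟩ :=
      Finite.exists_ne_map_eq_of_infinite fun m => redReach M (List.replicate m B).flatten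
    rcases hne.lt_or_gt with hlt | hlt
    exacts [⟨n, m, hlt, heq⟩, ⟨m, n, hlt, heq.symm⟩]
  refine ⟨n, m - n, Nat.sub_pos_of_lt hnm, fun k => ?_⟩
  induction k with
  | zero => rfl
  | succ k ih =>
    rw [Nat.mul_succ, ← add_assoc, hadd, ih, ← hadd, Nat.add_sub_cancel' hnm.le, heq]

end

theorem IsRational.exists_pumping {s : Set (FreeGroup α)} (hs : IsRational s)
    (B : List (α × Bool)) :
    ∃ n p, 0 < p ∧ ∀ U V k, IsReduced (U ++ (List.replicate n B).flatten ++ V) →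
      mk U * mk B ^ n * mk V ∈ s → mk U * mk B ^ (n + p * k) * mk V ∈ s := by
  obtain ⟨_, ⟨σ, _, M, rfl⟩, rfl⟩ := hs.exists_isRegular
  obtain ⟨n, p, hp, hM⟩ := exists_redReach_flatten_replicate_eq M B
  refine ⟨n, p, hp, fun U V k hred hmem => ?_⟩
  simp only [pow_mk, mul_mk] at hmem ⊢
  obtain ⟨l, hl, hlred⟩ := exists_red_of_mk_mem_image hred hmem
  have hreach : (M.start, M.eval l) ∈ redReach M _ := ⟨l, hlred, rfl⟩
  rw [redReach_append, redReach_append, ← hM k, ← redReach_append, ← redReach_append] at hreach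
  obtain ⟨l', hlred', heval⟩ := hreach
  exact ⟨l', show M.evalFrom _ l' ∈ M.accept from heval ▸ hl, Red.exact.2 ⟨_, hlred', .refl⟩⟩

theorem exists_mk_eq_of_mem_closure_range_of {g : FreeGroup α}
    (hg : g ∈ Submonoid.closure (Set.range of)) : ∃ L, (∀ a ∈ L, a.2 = true) ∧ mk L = g := by
  induction hg using Submonoid.closure_induction with
  | mem _ h =>
    obtain ⟨x, rfl⟩ := h
    exact ⟨[(x, true)], by simp, rfl⟩
  | one => exact ⟨[], by simp, rfl⟩
  | mul _ _ _ _ hg hh =>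
    obtain ⟨⟨L, hL, rfl⟩, K, hK, rfl⟩ := And.intro hg hh
    exact ⟨L ++ K, List.forall_mem_append.2 ⟨hL, hK⟩, mul_mk.symm⟩

theorem isReduced_of_forall_snd_eq_true {L : List (α × Bool)} (hL : ∀ a ∈ L, a.2 = true) :
    IsReduced L :=
  List.Pairwise.isChain
    (List.pairwise_iff_forall_sublist.2 fun h _ =>
      (hL _ (h.subset (by simp))).trans (hL _ (h.subset (by simp))).symm)

theorem IsRational.exists_pumping_prod {s : Set (FreeGroup α)} (hs : IsRational s)
    {b c : FreeGroup α} (hb : b ∈ Submonoid.closure (Set.range of))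
    (hc : c ∈ Submonoid.closure (Set.range of)) :
    ∃ n p, 0 < p ∧ ∀ l : List ℕ, (b ^ n * c) ^ l.length ∈ s →
      (l.map fun k => b ^ (n + p * k) * c).prod ∈ s := by
  obtain ⟨B, hB, rfl⟩ := exists_mk_eq_of_mem_closure_range_of hb
  obtain ⟨n, p, hp, hpump⟩ := hs.exists_pumping B
  have hpump_pos : ∀ u ∈ Submonoid.closure (Set.range of), ∀ v ∈ Submonoid.closure (Set.range of),
      ∀ k, u * mk B ^ n * v ∈ s → u * mk B ^ (n + p * k) * v ∈ s := by
    intro u hu v hv k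
    obtain ⟨U, hU, rfl⟩ := exists_mk_eq_of_mem_closure_range_of hu
    obtain ⟨V, hV, rfl⟩ := exists_mk_eq_of_mem_closure_range_of hv
    refine hpump U V k (isReduced_of_forall_snd_eq_true ?_)
    simp only [List.forall_mem_append, List.mem_flatten, List.mem_replicate]
    exact ⟨⟨hU, fun a ⟨_, ⟨_, rfl⟩, ha⟩ => hB a ha⟩, hV⟩
  have hprod : ∀ (l : List ℕ), ∀ u ∈ Submonoid.closure (Set.range of),
      u * (mk B ^ n * c) ^ l.length ∈ s →
        u * (l.map fun k => mk B ^ (n + p * k) * c).prod ∈ s := by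
    intro l
    induction l with
    | nil => exact fun u _ h => h
    | cons k l ih =>
      intro u hu h
      rw [List.map_cons, List.prod_cons, ← mul_assoc]
      refine ih _ (mul_mem hu (mul_mem (pow_mem hb _) hc)) ?_
      rw [List.length_cons, pow_succ', mul_assoc (mk B ^ n), ← mul_assoc u] at h
      simpa only [mul_assoc] using
        hpump_pos u hu _ (mul_mem hc (pow_mem (mul_mem (pow_mem hb n) hc) l.length)) k h
  exact ⟨n, p, hp, fun l h => by simpa using hprod l 1 (one_mem _) (by simpa using h)⟩

end Pumping

section VerbalSet

variable {G K : Type*} [Group G] [Group K] {w : FreeGroup ℕ}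

theorem map_mem_verbalSet (f : G →* K) {g : G} (hg : g ∈ verbalSet w G) : f g ∈ verbalSet w K := by
  obtain ⟨ψ, rfl⟩ := hg
  exact ⟨f.comp ψ, rfl⟩

theorem image_verbalSet {f : G →* K} (hf : Function.Surjective f) (w : FreeGroup ℕ) :
    f '' verbalSet w G = verbalSet w K := by
  refine Set.Subset.antisymm (Set.image_subset_iff.2 fun _ => map_mem_verbalSet f) ?_
  rintro _ ⟨ψ, rfl⟩
  choose g hg using hf
  refine ⟨_, ⟨FreeGroup.lift fun i => g (ψ (.of i)), rfl⟩, ?_⟩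
  rw [← MonoidHom.comp_apply]
  congr 1
  ext i
  simp [hg]

end VerbalSet

section ExponentSums

variable (w : FreeGroup ℕ)

theorem eWord_dvd_expSum (i : ℕ) : (eWord w : ℤ) ∣ expSum w i := by
  by_cases hi : i ∈ (expSum w).support
  · exact Int.natCast_dvd.2 (Finset.gcd_dvd hi)
  · simp [Finsupp.notMem_support_iff.1 hi]

theorem toAdd_apply_eq_sum_expSum {A : Type*} [AddCommGroup A]
    (E : FreeGroup ℕ →* Multiplicative A) :
    (E w).toAdd = (expSum w).sum fun i n => n • (E (.of i)).toAdd := by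
  have key : E = (AddMonoidHom.toMultiplicative (Finsupp.liftAddHom fun i =>
      (zmultiplesHom A) (E (.of i)).toAdd : (ℕ →₀ ℤ) →+ A)).comp
      (FreeGroup.lift fun i => Multiplicative.ofAdd (Finsupp.single i (1 : ℤ))) := by
    ext i
    simp
  exact congrArg Multiplicative.toAdd (DFunLike.congr_fun key w)

variable {w} in
theorem eq_one_of_eWord_nsmul_eq_zero {A : Type*} [AddCommGroup A]
    (hA : ∀ a : A, eWord w • a = 0) (E : FreeGroup ℕ →* Multiplicative A) : E w = 1 := by
  rw [← toAdd_eq_zero, toAdd_apply_eq_sum_expSum]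
  refine Finset.sum_eq_zero fun i _ => ?_
  obtain ⟨c, hc⟩ := eWord_dvd_expSum w i
  simp only [hc]
  rw [mul_comm, mul_smul, natCast_zsmul, hA, smul_zero]

theorem pow_eWord_mem_verbalSet {G : Type*} [Group G] (g : G) :
    g ^ eWord w ∈ verbalSet w G := by
  obtain ⟨c, hc⟩ := Finset.gcd_eq_sum_mul (expSum w).support (expSum w)
  have habs : (eWord w : ℤ) = (expSum w).support.gcd (expSum w) := by
    refine Int.dvd_antisymm (Int.natCast_nonneg _) Finset.Int.finsetGcd_nonneg
      (Finset.dvd_gcd fun i _ => eWord_dvd_expSum w i) ?_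
    exact Int.dvd_natCast.2 (Finset.dvd_gcd fun i hi =>
      Int.natAbs_dvd_natAbs.2 (Finset.gcd_dvd hi))
  refine ⟨(zpowersHom G g).comp (FreeGroup.lift fun i => Multiplicative.ofAdd (c i)), ?_⟩
  have h := toAdd_apply_eq_sum_expSum w (FreeGroup.lift fun i => Multiplicative.ofAdd (c i))
  simp only [FreeGroup.lift_apply_of, toAdd_ofAdd, smul_eq_mul] at h
  rw [MonoidHom.comp_apply, zpowersHom_apply, h, Finsupp.sum, ← hc, ← habs, zpow_natCast]

variable {w}

theorem IsProperWord.ne_one (hw : IsProperWord w) : w ≠ 1 := by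
  rintro rfl
  obtain ⟨G, _, H, _, hne, -⟩ := hw
  refine hne (Set.eq_singleton_iff_unique_mem.2 ⟨⟨1, rfl⟩, ?_⟩)
  rintro _ ⟨ψ, rfl⟩
  exact map_one ψ

theorem IsProperWord.eWord_ne_one (hw : IsProperWord w) : eWord w ≠ 1 := by
  intro he
  obtain ⟨G, _, H, _, -, hne⟩ := hw
  refine hne (Set.eq_univ_of_forall fun g => ?_)
  simpa [he] using pow_eWord_mem_verbalSet w g

end ExponentSums

section ZeroExponentSums

variable {X : Type*}

open SemidirectProduct in
open FreeGroup (of lift lift_apply_of freeGroupCongr) in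
/-- The conjugates `xⁱ y x⁻ⁱ` are free: in the holomorph of `FreeGroup ℤ`, the shift of the basis
conjugates `of 0` to `of i`. -/
theorem exists_injective_freeGroup_nat [Nontrivial X] :
    ∃ ψ : FreeGroup ℕ →* FreeGroup X, Function.Injective ψ := by
  classical
  obtain ⟨x, y, hxy⟩ := exists_pair_ne X
  let σ : MulAut (FreeGroup ℤ) := freeGroupCongr (Equiv.addRight 1)
  have hσ (i : ℕ) : (σ ^ i) (of 0) = of (i : ℤ) := by
    induction i with
    | zero => rfl
    | succ i ih => rw [pow_succ', MulAut.mul_apply, ih]; simp [σ]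
  let ρ : FreeGroup X →* FreeGroup ℤ ⋊[MonoidHom.id _] MulAut (FreeGroup ℤ) :=
    lift fun z => if z = x then inr σ else inl (of 0)
  let ψ : FreeGroup ℕ →* FreeGroup X := lift fun i => of x ^ i * of y * (of x ^ i)⁻¹
  have hcomp : ρ.comp ψ = inl.comp (FreeGroup.map ((↑) : ℕ → ℤ)) := by
    ext1 i
    simp only [MonoidHom.comp_apply, ρ, ψ, lift_apply_of, map_mul, map_inv, map_pow, if_pos,
      if_neg hxy.symm, FreeGroup.map.of]
    rw [← map_pow, ← map_inv, ← inl_aut, MonoidHom.id_apply, hσ]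
  refine ⟨ψ, Function.Injective.of_comp (f := ρ) ?_⟩
  rw [← MonoidHom.coe_comp, hcomp, MonoidHom.coe_comp]
  exact inl_injective.comp (FreeGroup.map_injective Nat.cast_injective)

theorem exists_isReduced_replicate_append [Nontrivial X] {L : List (X × Bool)} (hL : L ≠ [])
    (hred : FreeGroup.IsReduced L) : ∃ a : X × Bool, ∀ n m,
      FreeGroup.IsReduced (List.replicate n a ++ (L ++ List.replicate m (a.1, !a.2))) := by
  obtain ⟨z, hz⟩ := exists_ne (L.head hL).1
  have hrep (m : ℕ) (b : X × Bool) : FreeGroup.IsReduced (List.replicate m b) :=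
    List.isChain_replicate_of_rel _ fun _ => rfl
  refine ⟨(z, !(L.getLast hL).2), fun n m => List.isChain_append.2 ⟨hrep _ _,
    List.isChain_append.2 ⟨hred, hrep _ _, ?_⟩, ?_⟩⟩
  · intro b hb c hc _
    obtain rfl := List.eq_of_mem_replicate (List.mem_of_mem_head? hc)
    obtain rfl : L.getLast hL = b := by simpa [List.getLast?_eq_some_getLast hL] using hb
    exact (Bool.not_not _).symm
  · intro b hb c hc hbc
    obtain rfl := List.eq_of_mem_replicate (List.mem_of_mem_getLast? hb)
    rw [List.head?_append_of_ne_nil _ hL, List.head?_eq_some_head hL, Option.mem_some] at hc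
    exact absurd (hbc.trans (congrArg Prod.fst hc.symm)) hz

open FreeGroup (lift toWord_eq_nil_iff isReduced_toWord mk_toWord mul_mk pow_mk one_eq_mk) in
theorem not_isRational_verbalSet_of_eWord_eq_zero [Nontrivial X] {w : FreeGroup ℕ} (hw : w ≠ 1)
    (he : eWord w = 0) : ¬ IsRational (verbalSet w (FreeGroup X)) := by
  classical
  intro hrat
  let ε : FreeGroup X →* Multiplicative ℤ := lift fun _ => .ofAdd 1
  have hker : ∀ g ∈ verbalSet w (FreeGroup X), ε g = 1 := by
    rintro _ ⟨ψ, rfl⟩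
    exact eq_one_of_eWord_nsmul_eq_zero (by simp [he]) (ε.comp ψ)
  obtain ⟨ψ, hψ⟩ := exists_injective_freeGroup_nat (X := X)
  have hψw : (ψ w).toWord ≠ [] := by
    rwa [Ne, toWord_eq_nil_iff, map_eq_one_iff ψ hψ]
  obtain ⟨a, ha⟩ := exists_isReduced_replicate_append hψw isReduced_toWord
  obtain ⟨n, p, hp, hpump⟩ := hrat.exists_pumping [a]
  set g := FreeGroup.mk [a] with hg
  have hV : FreeGroup.mk ((ψ w).toWord ++ List.replicate n (a.1, !a.2)) = ψ w * (g ^ n)⁻¹ := by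
    have hginv : g⁻¹ = FreeGroup.mk [(a.1, !a.2)] := rfl
    rw [← mul_mk, mk_toWord, ← inv_pow, hginv, pow_mk, List.flatten_replicate_singleton]
  have hconj : g ^ n * (ψ w * (g ^ n)⁻¹) ∈ verbalSet w (FreeGroup X) := by
    rw [← mul_assoc]
    exact map_mem_verbalSet (MulAut.conj (g ^ n)).toMonoidHom ⟨ψ, rfl⟩
  have hpumped : g ^ (n + p * 1) * (ψ w * (g ^ n)⁻¹) ∈ verbalSet w (FreeGroup X) := by
    have h := hpump [] _ 1 (by simpa using ha n n)
    rw [hV, ← one_eq_mk, one_mul, one_mul] at h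
    exact h hconj
  have hgp : ε g ^ p = 1 := by
    have h := hker _ hpumped
    rwa [mul_one, add_comm, pow_add, mul_assoc, map_mul, hker _ hconj, mul_one, map_pow] at h
  have hgone : ε g ≠ 1 := by
    rcases a with ⟨z, _ | _⟩ <;> simp [ε, hg]
  exact hgone ((pow_eq_one_iff_left hp.ne').1 hgp)

end ZeroExponentSums

section Quasimorphism

variable {G A : Type*} [Group G] [AddCommGroup A]

/-- Quasimorphisms of defect at most `D`, with values in an abelian group `A` whose size is measured
by the seminorm `p`. -/
def IsQuasimorphism (p : AddGroupSeminorm A) (D : ℝ) (q : G → A) : Prop :=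
  ∀ g h, p (q (g * h) - q g - q h) ≤ D

variable {p : AddGroupSeminorm A} {D : ℝ} {q : G → A}

theorem isQuasimorphism_of_forall_le (hq : ∀ g, p (q g) ≤ D) : IsQuasimorphism p (3 * D) q :=
  fun g h => calc
    p (q (g * h) - q g - q h) ≤ p (q (g * h)) + p (q g) + p (q h) :=
      (map_sub_le_add p _ _).trans (add_le_add_left (map_sub_le_add p _ _) _)
    _ ≤ 3 * D := by linarith [hq (g * h), hq g, hq h]

theorem IsQuasimorphism.map_one_le (hq : IsQuasimorphism p D q) : p (q 1) ≤ D := by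
  simpa using hq 1 1

theorem IsQuasimorphism.map_add_map_inv_le (hq : IsQuasimorphism p D q) (g : G) :
    p (q g + q g⁻¹) ≤ 2 * D := calc
  p (q g + q g⁻¹) = p (q 1 - (q (g * g⁻¹) - q g - q g⁻¹)) := by rw [mul_inv_cancel]; congr 1; abel
  _ ≤ p (q 1) + p (q (g * g⁻¹) - q g - q g⁻¹) := map_sub_le_add p _ _
  _ ≤ 2 * D := by linarith [hq.map_one_le, hq g g⁻¹]

theorem IsQuasimorphism.exists_sub_lift_le {ι : Type*} (hq : IsQuasimorphism p D q)
    (u : FreeGroup ι) : ∃ C, ∀ ψ : FreeGroup ι →* G,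
      p (q (ψ u) -
        (FreeGroup.lift (fun i => Multiplicative.ofAdd (q (ψ (.of i)))) u).toAdd) ≤ C := by
  induction u using FreeGroup.induction_on with
  | C1 => exact ⟨D, fun ψ => by simpa using hq.map_one_le⟩
  | of i => exact ⟨0, fun ψ => by simp⟩
  | inv_of i _ =>
    refine ⟨2 * D, fun ψ => ?_⟩
    simpa [add_comm] using hq.map_add_map_inv_le (ψ (.of i))
  | mul u v ihu ihv =>
    obtain ⟨⟨C, hC⟩, C', hC'⟩ := And.intro ihu ihv
    refine ⟨D + C + C', fun ψ => ?_⟩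
    set E := FreeGroup.lift fun i => Multiplicative.ofAdd (q (ψ (.of i)))
    calc p (q (ψ (u * v)) - (E (u * v)).toAdd)
      _ = p ((q (ψ u * ψ v) - q (ψ u) - q (ψ v)) + (q (ψ u) - (E u).toAdd) +
            (q (ψ v) - (E v).toAdd)) := by rw [map_mul, map_mul, toAdd_mul]; congr 1; abel
      _ ≤ D + C + C' := (map_add_le_add p _ _).trans
            (add_le_add ((map_add_le_add p _ _).trans (add_le_add (hq _ _) (hC ψ))) (hC' ψ))

theorem IsQuasimorphism.exists_le_of_mem_verbalSet (hq : IsQuasimorphism p D q) {w : FreeGroup ℕ}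
    (hA : ∀ a : A, eWord w • a = 0) : ∃ C, ∀ g ∈ verbalSet w G, p (q g) ≤ C := by
  obtain ⟨C, hC⟩ := hq.exists_sub_lift_le w
  refine ⟨C, ?_⟩
  rintro _ ⟨ψ, rfl⟩
  simpa [eq_one_of_eWord_nsmul_eq_zero hA] using hC ψ

end Quasimorphism

section SyllableSum

open Monoid

variable {ι A : Type*} {G : ι → Type*} [∀ i, Group (G i)] [AddCommGroup A]

open scoped Classical in
/-- The sum of `f i s` over the syllables `s ∈ G i` of the reduced form of an element of the free
product of the groups `G i`. -/
noncomputable def syllableSum (f : ∀ i, G i → A) (g : CoprodI G) : A :=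
  ((CoprodI.Word.equiv g).toList.map fun s => f s.1 s.2).sum

theorem syllableSum_prod_map_of (f : ∀ i, G i → A) {L : List (Σ i, G i)}
    (hone : ∀ s ∈ L, s.2 ≠ 1) (hchain : L.IsChain (·.1 ≠ ·.1)) :
    syllableSum f (L.map fun s => CoprodI.of s.2).prod = (L.map fun s => f s.1 s.2).sum := by
  classical
  exact congrArg (fun w : CoprodI.Word G => (w.toList.map fun s => f s.1 s.2).sum)
    (CoprodI.Word.equiv.apply_symm_apply ⟨L, hone, hchain⟩)

theorem syllableSum_prod_mul_prod_of_isChain (f : ∀ i, G i → A) {L₁ L₂ : List (Σ i, G i)}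
    (hone : ∀ s ∈ L₁ ++ L₂, s.2 ≠ 1) (hchain : (L₁ ++ L₂).IsChain (·.1 ≠ ·.1)) :
    syllableSum f ((L₁.map fun s => CoprodI.of s.2).prod *
        (L₂.map fun s => CoprodI.of s.2).prod) =
      (L₁.map fun s => f s.1 s.2).sum + (L₂.map fun s => f s.1 s.2).sum := by
  rw [← List.prod_append, ← List.map_append, syllableSum_prod_map_of f hone hchain,
    List.map_append, List.sum_append]

variable {p : AddGroupSeminorm A} {D : ℝ} {f : ∀ i, G i → A}

theorem syllableSum_prod_mul_prod_le (hD : 0 ≤ D) (hf : ∀ i, IsQuasimorphism p D (f i))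
    (hodd : ∀ i s, f i s⁻¹ = -f i s) (L₁ L₂ : List (Σ i, G i))
    (hone₁ : ∀ s ∈ L₁, s.2 ≠ 1) (hchain₁ : L₁.IsChain (·.1 ≠ ·.1))
    (hone₂ : ∀ s ∈ L₂, s.2 ≠ 1) (hchain₂ : L₂.IsChain (·.1 ≠ ·.1)) :
    p (syllableSum f ((L₁.map fun s => CoprodI.of s.2).prod *
        (L₂.map fun s => CoprodI.of s.2).prod) -
      (L₁.map fun s => f s.1 s.2).sum - (L₂.map fun s => f s.1 s.2).sum) ≤ D := by
  have hzero : p 0 ≤ D := by simpa using hD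
  induction L₂ generalizing L₁ with
  | nil =>
    rw [syllableSum_prod_mul_prod_of_isChain f (by simpa using hone₁) (by simpa using hchain₁)]
    simpa using hzero
  | cons t L₂ ih =>
    obtain rfl | ⟨L₁, s, rfl⟩ := L₁.eq_nil_or_concat'
    · rw [syllableSum_prod_mul_prod_of_isChain f hone₂ hchain₂]
      simpa using hzero
    obtain ⟨i, s⟩ := s
    obtain ⟨j, t⟩ := t
    by_cases hij : i = j
    · subst hij
      by_cases hst : s * t = 1
      · obtain rfl : t = s⁻¹ := (inv_eq_of_mul_eq_one_right hst).symm
        have hcancel := ih L₁ (by simp_all) (List.isChain_append.1 hchain₁).1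
          (by simp_all) hchain₂.tail
        convert hcancel using 2
        simp only [List.map_append, List.map_cons, List.map_nil, List.prod_append, List.prod_cons,
          List.prod_nil, mul_one, map_inv, mul_assoc, mul_inv_cancel_left, List.sum_append,
          List.sum_cons, List.sum_nil, add_zero, hodd]
        abel
      · have hmerge := syllableSum_prod_map_of f (L := L₁ ++ ⟨i, s * t⟩ :: L₂)
          (by simp_all [or_imp, forall_and])
          (by simp_all [List.isChain_append, List.isChain_cons])
        simp only [List.map_append, List.map_cons, List.map_nil, List.prod_append, List.prod_cons,
          List.prod_nil, mul_one, map_mul, mul_assoc, List.sum_append, List.sum_cons, List.sum_nil,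
          add_zero] at hmerge ⊢
        rw [hmerge]
        convert hf i s t using 2
        abel
    · rwa [syllableSum_prod_mul_prod_of_isChain f (List.forall_mem_append.2 ⟨hone₁, hone₂⟩)
        (List.isChain_append.2 ⟨hchain₁, hchain₂, by simpa using hij⟩), add_sub_cancel_left,
        sub_self]

theorem IsQuasimorphism.syllableSum (hD : 0 ≤ D) (hf : ∀ i, IsQuasimorphism p D (f i))
    (hodd : ∀ i s, f i s⁻¹ = -f i s) : IsQuasimorphism p D (syllableSum f) := by
  classical
  intro g h
  obtain ⟨⟨v, rfl⟩, w, rfl⟩ := And.intro (CoprodI.Word.equiv.symm.surjective g)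
    (CoprodI.Word.equiv.symm.surjective h)
  have hsum := fun u : CoprodI.Word G => syllableSum_prod_map_of f u.ne_one u.chain_ne
  have := syllableSum_prod_mul_prod_le hD hf hodd _ _ v.ne_one v.chain_ne w.ne_one w.chain_ne
  rwa [← hsum, ← hsum] at this

end SyllableSum

section PositiveExponentGcd

open Monoid

/-- The number of nonzero values, as a seminorm on finitely supported functions. -/
noncomputable def hammingSeminorm (κ R : Type*) [AddCommGroup R] : AddGroupSeminorm (κ →₀ R) where
  toFun a := a.support.card
  map_zero' := by simp
  neg' a := by rw [Finsupp.support_neg]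
  add_le' a b := by
    classical
    exact_mod_cast (Finset.card_le_card Finsupp.support_add).trans (Finset.card_union_le _ _)

variable {ι : Type*} {G : ι → Type*} [∀ i, Group (G i)] (R : Type*) [AddCommGroupWithOne R]

/-- The indicator of the syllable `s ∈ G i` minus that of its inverse. Its `syllableSum` counts, for
each syllable, the signed number of its occurrences. -/
noncomputable def signedSyllable (i : ι) (s : G i) : (Σ i, G i) →₀ R :=
  .single ⟨i, s⟩ 1 - .single ⟨i, s⁻¹⟩ 1

theorem signedSyllable_inv (i : ι) (s : G i) :
    signedSyllable R i s⁻¹ = -signedSyllable R i s := by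
  simp [signedSyllable]

theorem hammingSeminorm_signedSyllable_le (i : ι) (s : G i) :
    hammingSeminorm _ R (signedSyllable R i s) ≤ 2 := by
  have hsingle (r : Σ i, G i) : hammingSeminorm _ R (.single r 1) ≤ 1 :=
    Nat.cast_le_one.2 ((Finset.card_le_card Finsupp.support_single_subset).trans_eq
      (Finset.card_singleton r))
  exact (map_sub_le_add _ _ _).trans
    ((add_le_add (hsingle _) (hsingle _)).trans_eq one_add_one_eq_two)

theorem isQuasimorphism_syllableSum_signedSyllable (G : ι → Type*) [∀ i, Group (G i)] :
    IsQuasimorphism (hammingSeminorm (Σ i, G i) R) (3 * 2) (syllableSum (signedSyllable R)) :=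
  .syllableSum (by norm_num)
    (fun i => isQuasimorphism_of_forall_le (hammingSeminorm_signedSyllable_le R i))
    (signedSyllable_inv R)

theorem syllableSum_prod_map_of_mul_of {A κ : Type*} [AddCommGroup A] (f : ∀ i, G i → A) {i j : ι}
    (hij : i ≠ j) {s : κ → G i} (hs : ∀ k, s k ≠ 1) {t : G j} (ht : t ≠ 1) (l : List κ) :
    syllableSum f (l.map fun k => CoprodI.of (s k) * CoprodI.of t).prod =
      (l.map fun k => f i (s k) + f j t).sum := by
  let L : List (Σ i, G i) := l.flatMap fun k => [⟨i, s k⟩, ⟨j, t⟩]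
  have hone : ∀ r ∈ L, r.2 ≠ 1 := by
    intro r hr
    obtain ⟨k, -, hr⟩ := List.mem_flatMap.1 hr
    aesop
  have hchain : L.IsChain (·.1 ≠ ·.1) := by
    clear hone
    simp only [L]
    induction l with
    | nil => exact .nil
    | cons k l ih => cases l <;> simp_all [List.flatMap_cons, hij.symm]
  have hprod : (L.map fun r => CoprodI.of r.2).prod =
      (l.map fun k => CoprodI.of (s k) * CoprodI.of t).prod := by
    simp [L, List.flatMap, List.prod_flatten, Function.comp_def]
  have hsum : (L.map fun r => f r.1 r.2).sum = (l.map fun k => f i (s k) + f j t).sum := by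
    simp [L, List.flatMap, List.sum_flatten, Function.comp_def]
  rw [← hprod, ← hsum, syllableSum_prod_map_of f hone hchain]

variable [NeZero (1 : R)]

theorem le_hammingSeminorm_syllableSum {i j : ι} (hij : i ≠ j) {s : ℕ → G i}
    (hs : Function.Injective s) (hs_mul : ∀ k l, s k * s l ≠ 1) {t : G j} (ht : t ≠ 1) (N : ℕ) :
    N ≤ hammingSeminorm _ R (syllableSum (signedSyllable R)
      ((List.range N).map fun k => CoprodI.of (s k) * CoprodI.of t).prod) := by
  classical
  have hs_one (k : ℕ) : s k ≠ 1 := fun h => hs_mul k k (by simp [h])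
  rw [syllableSum_prod_map_of_mul_of _ hij hs_one ht]
  let a := ((List.range N).map fun k => signedSyllable R i (s k) + signedSyllable R j t).sum
  have ha_apply : ∀ k ∈ Finset.range N, a ⟨i, s k⟩ = 1 := by
    intro k hk
    have hinv (l : ℕ) : (s l)⁻¹ ≠ s k := fun h => hs_mul l k (h ▸ mul_inv_cancel _)
    change (∑ l ∈ Finset.range N, (signedSyllable R i (s l) + signedSyllable R j t)) ⟨i, s k⟩ = 1
    simp [signedSyllable, Finsupp.single_apply, hij.symm, hs.eq_iff, hinv, Finset.mem_range.1 hk]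
  have hsub : (Finset.range N).image (fun k => (⟨i, s k⟩ : Σ i, G i)) ⊆ a.support := by
    rw [Finset.image_subset_iff]
    intro k hk
    simp [ha_apply k hk]
  have hcard := Finset.card_image_of_injective (Finset.range N) (sigma_mk_injective.comp hs)
  rw [Finset.card_range] at hcard
  exact Nat.cast_le.2 (hcard.symm.trans_le (Finset.card_le_card hsub))

theorem le_hammingSeminorm_syllableSum_freeGroupEquivCoprodI {X : Type*} {x y : X} (hxy : x ≠ y)
    {ν : ℕ → ℕ} (hν : Function.Injective ν) (hν0 : ∀ k, ν k ≠ 0) (N : ℕ) :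
    N ≤ hammingSeminorm _ R (syllableSum (signedSyllable R) (freeGroupEquivCoprodI
      ((List.range N).map fun k => FreeGroup.of x ^ ν k * FreeGroup.of y).prod)) := by
  let u := FreeGroup.of ()
  have hu : u ≠ 1 := FreeGroup.of_ne_one ()
  have hpow (k l : ℕ) : u ^ ν k * u ^ ν l ≠ 1 := by
    rwa [← pow_add, Ne, pow_eq_one_iff_left (by simp [hν0])]
  have h := le_hammingSeminorm_syllableSum R (G := fun _ : X => FreeGroup Unit) hxy
    ((IsMulTorsionFree.pow_right_injective hu).comp hν) hpow hu N
  simpa [map_list_prod, Function.comp_def, u] using h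

open FreeGroup (of) in
theorem not_isRational_verbalSet_of_one_lt_eWord {X : Type*} [Nontrivial X] {w : FreeGroup ℕ}
    (he : 1 < eWord w) : ¬ IsRational (verbalSet w (FreeGroup X)) := by
  intro hrat
  have : Fact (1 < eWord w) := ⟨he⟩
  obtain ⟨x, y, hxy⟩ := exists_pair_ne X
  obtain ⟨n, p, hp, hpump⟩ := hrat.exists_pumping_prod (b := of x) (c := of y)
    (Submonoid.subset_closure ⟨x, rfl⟩) (Submonoid.subset_closure ⟨y, rfl⟩)
  obtain ⟨C, hC⟩ := (isQuasimorphism_syllableSum_signedSyllable (ZMod (eWord w))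
    fun _ : X => FreeGroup Unit).exists_le_of_mem_verbalSet (w := w) fun a => by ext; simp
  obtain ⟨m, hm⟩ := exists_nat_gt C
  let N := m * eWord w
  have hpumped : ((List.range N).map fun k => of x ^ (n + p * (k + 1)) * of y).prod ∈
      verbalSet w (FreeGroup X) := by
    have h := hpump ((List.range N).map (· + 1))
    rw [List.length_map, List.length_range, pow_mul, List.map_map] at h
    exact h (pow_eWord_mem_verbalSet w _)
  have hinj : Function.Injective fun k => n + p * (k + 1) := fun k l h =>
    Nat.succ_injective (Nat.eq_of_mul_eq_mul_left hp (Nat.add_left_cancel h))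
  have hlower : (N : ℝ) ≤ C :=
    (le_hammingSeminorm_syllableSum_freeGroupEquivCoprodI (ZMod (eWord w)) hxy hinj
      (fun k => by positivity) N).trans
    (hC _ (map_mem_verbalSet freeGroupEquivCoprodI.toMonoidHom hpumped))
  have hmN : (m : ℝ) ≤ N := Nat.cast_le.2 (Nat.le_mul_of_pos_right m (by lia))
  linarith

end PositiveExponentGcd

theorem not_isRational_verbalSet {X : Type*} [Nontrivial X] {w : FreeGroup ℕ}
    (hw : IsProperWord w) : ¬ IsRational (verbalSet w (FreeGroup X)) := by
  obtain he | he := (eWord w).eq_zero_or_pos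
  · exact not_isRational_verbalSet_of_eWord_eq_zero hw.ne_one he
  · exact not_isRational_verbalSet_of_one_lt_eWord (lt_of_le_of_ne he hw.eWord_ne_one.symm)

/-- If `H` surjects onto a free non-abelian group, then for every proper word `w`
the set `w[H]` is not rational in `H`. -/
theorem stmt_16 {H X : Type*} [Group H] (x y : X) (hxy : x ≠ y)
    (φ : H →* FreeGroup X) (hφ : Function.Surjective φ) :
    ∀ w : FreeGroup ℕ, IsProperWord w → ¬ IsRational (verbalSet w H) := by
  intro w hw hrat
  have : Nontrivial X := ⟨x, y, hxy⟩
  exact not_isRational_verbalSet hw (image_verbalSet hφ w ▸ hrat.image φ)
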